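/- arXiv:2102.00803 — 2 statements merged into one kernel-verified Lean document; each statement's English description precedes it below -/
import Mathlib

section
/- Let F ⊆ ℤ² be a cluster whose direction set dir(F) contains at most two lines, and let T be an F-tiling. Then T can be partitioned into at most two 1-periodic subsets: T = T₁ ∪ T₂ with T₁ ∩ T₂ = ∅, where each Tᵢ is either empty or 1-periodic. -/
/-!
Let the group ring `ℤ[ℤ²]` act on functions by convolution, so that a tiling with indicator `t`
satisfies `(∑ v ∈ F, v) • t = 1`. Frobenius modulo the primes `p > #F` shows that the dilated
clusters `r F` with `r ≡ 1` modulo `(#F)!` tile with the same `t`. Isolating one `v₀ ∈ F` and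
averaging over `r`, the function `1 - t` is killed by a product of difference operators in the
directions `v - v₀`, `v ≠ v₀`, for every choice of `v₀`.

If a line in direction `d` meets `F` only in `v₀`, then no factor of the product for this `v₀` is
parallel to `d`. Hence a bounded convolution of `1 - t` that is `d`-periodic is periodic in every
direction, and the factor in direction `d` can be traded for one in any prescribed direction. As
at most two directions have no such `v₀`, an annihilator of `1 - t` with just two factors
remains. Where both first differences of a `0`-`1` function are nonzero, so is its mixed difference.
Hence, if the mixed difference for `a`, `b` vanishes, then on every coset of `ℤ a` the function is
`a`-periodic or invariant under the shift by `b`.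
-/

noncomputable section

/-- `T` is a tiling of `ℤ²` by translates of the cluster `F`. -/
def IsTiling (F : Finset (ℤ × ℤ)) (T : Set (ℤ × ℤ)) : Prop :=
  ∀ p : ℤ × ℤ, ∃! tv : (ℤ × ℤ) × (ℤ × ℤ), tv.1 ∈ T ∧ tv.2 ∈ F ∧ p = tv.1 + tv.2

/-- The embedding of the integer lattice into the plane. -/
def toR (p : ℤ × ℤ) : ℝ × ℝ := ((p.1 : ℝ), (p.2 : ℝ))

/-- A line through the origin of `ℝ²`: the span of a nonzero vector. -/
def IsLine (ℓ : Submodule ℝ (ℝ × ℝ)) : Prop :=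
  ∃ w : ℝ × ℝ, w ≠ 0 ∧ ℓ = Submodule.span ℝ {w}

/-- The direction set of `S ⊆ ℤ²`: lines `ℓ` through the origin such that every
translate of `ℓ` that meets `S` meets it in at least two points. -/
def dirSet (S : Set (ℤ × ℤ)) : Set (Submodule ℝ (ℝ × ℝ)) :=
  {ℓ | IsLine ℓ ∧ ∀ a : ℝ × ℝ, (∃ s ∈ S, toR s - a ∈ ℓ) →
      ∃ s ∈ S, ∃ t ∈ S, s ≠ t ∧ toR s - a ∈ ℓ ∧ toR t - a ∈ ℓ}

/-- A subset of `ℤ²` is `1`-periodic if it is invariant under translation by some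
nonzero vector. -/
def OnePeriodicSet (S : Set (ℤ × ℤ)) : Prop :=
  ∃ g : ℤ × ℤ, g ≠ 0 ∧ (fun p => p + g) '' S = S

open AddMonoidAlgebra Finset
open scoped translate

/-- A function on `G` with bounded values. -/
def BoundedFun {G : Type*} (g : G → ℤ) : Prop :=
  ∃ B, ∀ x, |g x| ≤ B

theorem eq_zero_of_forall_abs_nsmul_le {M : Type*} [AddCommGroup M] [LinearOrder M]
    [IsOrderedAddMonoid M] [Archimedean M] {a C : M} (h : ∀ n : ℕ, |n • a| ≤ C) : a = 0 := by
  by_contra ha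
  obtain ⟨n, hn⟩ := exists_lt_nsmul (abs_pos.mpr ha) C
  exact (abs_nsmul n a ▸ h n).not_gt hn

theorem boundedFun_of_mem_Icc {G : Type*} {t : G → ℤ} (ht : t ∈ Set.Icc 0 1) : BoundedFun t :=
  ⟨1, fun x => abs_le.mpr ⟨neg_one_lt_zero.le.trans (ht.1 x), ht.2 x⟩⟩

theorem one_sub_mem_Icc {G : Type*} {t : G → ℤ} (ht : t ∈ Set.Icc 0 1) : 1 - t ∈ Set.Icc 0 1 :=
  ⟨sub_nonneg.mpr ht.2, sub_le_self _ ht.1⟩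

theorem indicator_one_mem_Icc {G : Type*} (T : Set G) : T.indicator (1 : G → ℤ) ∈ Set.Icc 0 1 :=
  ⟨Set.indicator_nonneg fun _ _ => zero_le_one, Set.indicator_le_self' fun _ _ => zero_le_one⟩

theorem indicator_one_eq_iff {G : Type*} {T : Set G} {x y : G} :
    T.indicator (1 : G → ℤ) x = T.indicator 1 y ↔ (x ∈ T ↔ y ∈ T) := by
  by_cases hx : x ∈ T <;> by_cases hy : y ∈ T <;> simp [hx, hy]

theorem exists_sum_pow_prime_eq {R ι : Type*} [CommSemiring R] {p : ℕ} (hp : p.Prime) (s : Finset ι)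
    (f : ι → R) : ∃ r, (∑ i ∈ s, f i) ^ p = ∑ i ∈ s, f i ^ p + p * r := by
  classical
  induction s using Finset.induction_on with
  | empty => exact ⟨0, by simp [hp.ne_zero]⟩
  | insert i s hi ih =>
    obtain ⟨r, hr⟩ := ih
    obtain ⟨r', hr'⟩ := exists_add_pow_prime_eq hp (f i) (∑ j ∈ s, f j)
    refine ⟨r + f i * (∑ j ∈ s, f j) * r', ?_⟩
    rw [sum_insert hi, sum_insert hi, hr', hr]
    ring

theorem lt_of_prime_dvd_one_add_mul_factorial {n k p : ℕ} (hp : p.Prime)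
    (h : p ∣ 1 + k * n.factorial) : n < p := by
  by_contra! hle
  have hdvd : p ∣ k * n.factorial := (hp.dvd_factorial.mpr hle).mul_left k
  exact hp.one_lt.ne' (Nat.dvd_one.mp ((Nat.dvd_add_left hdvd).mp h))

/-! ### Convolution by the group ring -/

section GroupRing

variable {G ι : Type*} [AddCommGroup G]

/-- The translation representation of `G` on the integer-valued functions on `G`. -/
def translationHom : Multiplicative G →* Module.End ℤ (G → ℤ) where
  toFun v :=
    { toFun := τ v.toAdd
      map_add' := translate_add_right _
      map_smul' := fun n g => translate_smul_right _ g n }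
  map_one' := LinearMap.ext translate_zero
  map_mul' _ _ := LinearMap.ext (translate_add _ _)

/-- The group ring acts on functions by convolution: the basis element at `v` acts as the
translation `τ v`. -/
abbrev convolutionModule : Module ℤ[G] (G → ℤ) :=
  Module.compHom _ (lift ℤ (Module.End ℤ (G → ℤ)) G translationHom).toRingHom

attribute [local instance] convolutionModule

/-- The element of the group ring acting on functions as the difference operator
`g ↦ τ v g - g`. -/
def diffElem (v : G) : ℤ[G] :=
  single v 1 - 1

theorem single_one_smul (v : G) (g : G → ℤ) : single v (1 : ℤ) • g = τ v g := by
  change lift ℤ (Module.End ℤ (G → ℤ)) G translationHom (single v 1) g = _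
  rw [lift_single, one_smul]
  rfl

theorem smul_apply_eq_sum (f : ℤ[G]) (g : G → ℤ) (x : G) :
    (f • g) x = f.coeff.sum fun v n => n * g (x - v) := by
  change lift ℤ (Module.End ℤ (G → ℤ)) G translationHom f g x = _
  rw [lift_apply, Finsupp.sum, LinearMap.sum_apply, Finset.sum_apply]
  rfl

theorem diffElem_smul_apply (v : G) (g : G → ℤ) (x : G) :
    (diffElem v • g) x = g (x - v) - g x := by
  rw [diffElem, sub_smul, one_smul, single_one_smul]
  rfl

theorem diffElem_smul_eq_zero_iff {v : G} {g : G → ℤ} :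
    diffElem v • g = 0 ↔ Function.Periodic g v := by
  refine ⟨fun h x => ?_, fun h => funext fun x => ?_⟩
  · have := congrFun h (x + v)
    rw [diffElem_smul_apply, add_sub_cancel_right] at this
    exact (sub_eq_zero.mp this).symm
  · rw [diffElem_smul_apply, h.sub_eq, sub_self, Pi.zero_apply]

theorem diffElem_smul_one (v : G) : diffElem v • (1 : G → ℤ) = 0 :=
  diffElem_smul_eq_zero_iff.mpr fun _ => rfl

theorem geom_sum_mul_diffElem (v : G) (n : ℕ) :
    (∑ k ∈ range n, single (k • v) (1 : ℤ)) * diffElem v = diffElem (n • v) := by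
  simpa only [diffElem, single_pow, one_pow] using geom_sum_mul (single v (1 : ℤ)) n

theorem diffElem_add (u v : G) :
    diffElem (u + v) = single u 1 * diffElem v + diffElem u := by
  simp only [diffElem, mul_sub, single_mul_single, mul_one, sub_add_sub_cancel]

theorem diffElem_neg (v : G) : diffElem (-v) = -single (-v) 1 * diffElem v := by
  rw [diffElem, diffElem, neg_mul, mul_sub, single_mul_single, neg_add_cancel, mul_one, mul_one,
    ← one_def, neg_sub]

theorem diffElem_dvd_diffElem_zsmul (v : G) (n : ℤ) : diffElem v ∣ diffElem (n • v) := by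
  obtain ⟨k, rfl | rfl⟩ := n.eq_nat_or_neg
  all_goals have hk : diffElem v ∣ diffElem (k • v) :=
    Dvd.intro_left _ (geom_sum_mul_diffElem v k)
  · rwa [natCast_zsmul]
  · rw [neg_smul, natCast_zsmul, diffElem_neg]
    exact hk.mul_left _

theorem exists_forall_abs_smul_le (f : ℤ[G]) :
    ∃ C : ℤ, ∀ (g : G → ℤ) (B : ℤ), (∀ x, |g x| ≤ B) → ∀ x, |(f • g) x| ≤ C * B := by
  refine ⟨f.coeff.sum fun _ n => |n|, fun g B hB x => ?_⟩
  rw [smul_apply_eq_sum, Finsupp.sum, Finsupp.sum, sum_mul]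
  refine (abs_sum_le_sum_abs _ _).trans (sum_le_sum fun v _ => ?_)
  rw [abs_mul]
  exact mul_le_mul_of_nonneg_left (hB _) (abs_nonneg _)

theorem BoundedFun.smul {g : G → ℤ} (hg : BoundedFun g) (f : ℤ[G]) : BoundedFun (f • g) := by
  obtain ⟨B, hB⟩ := hg
  obtain ⟨C, hC⟩ := exists_forall_abs_smul_le f
  exact ⟨C * B, hC g B hB⟩

theorem abs_diffElem_smul_le {g : G → ℤ} {B : ℤ} (hB : ∀ x, |g x| ≤ B) (v x : G) :
    |(diffElem v • g) x| ≤ B + B := by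
  rw [diffElem_smul_apply]
  exact (abs_sub _ _).trans (add_le_add (hB _) (hB _))

/-- Along `ℤ v` the function `g` is affine, so boundedness makes it constant there. -/
theorem BoundedFun.diffElem_smul_eq_zero_of_sq {g : G → ℤ} (hg : BoundedFun g) {v : G}
    (h : (diffElem v * diffElem v) • g = 0) : diffElem v • g = 0 := by
  obtain ⟨B, hB⟩ := hg
  rw [mul_smul, diffElem_smul_eq_zero_iff] at h
  have affine (n : ℕ) : diffElem (n • v) • g = n • diffElem v • g := by
    rw [← geom_sum_mul_diffElem, mul_smul, sum_smul, ← card_range n, ← sum_const, card_range]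
    refine sum_congr rfl fun k _ => ?_
    rw [single_one_smul]
    exact funext fun x => h.sub_nsmul_eq k
  refine funext fun x => eq_zero_of_forall_abs_nsmul_le (C := B + B) fun n => ?_
  simpa only [affine, Pi.smul_apply] using abs_diffElem_smul_le hB (n • v) x

theorem BoundedFun.diffElem_smul_eq_zero_of_pow {g : G → ℤ} (hg : BoundedFun g) {v : G} {n : ℕ}
    (h : diffElem v ^ n • g = 0) : diffElem v • g = 0 := by
  induction n with
  | zero => rw [pow_zero, one_smul] at h; rw [h, smul_zero]
  | succ n ih =>
    rcases n with _ | n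
    · rwa [zero_add, pow_one] at h
    · refine ih ?_
      rw [pow_succ', mul_smul]
      refine (hg.smul _).diffElem_smul_eq_zero_of_sq ?_
      rwa [smul_smul, mul_assoc, ← pow_succ', ← pow_succ']

theorem BoundedFun.diffElem_zsmul_mul_smul_eq_zero {g : G → ℤ} (hg : BoundedFun g) {f : ℤ[G]}
    {a : G} {m : ℤ} (h : Function.Periodic ((diffElem a * f) • g) (m • a)) :
    (diffElem (m • a) * f) • g = 0 := by
  obtain ⟨k, hk⟩ := diffElem_dvd_diffElem_zsmul a m
  rw [mul_smul]
  refine (hg.smul f).diffElem_smul_eq_zero_of_sq ?_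
  calc (diffElem (m • a) * diffElem (m • a)) • f • g
      = k • diffElem (m • a) • (diffElem a * f) • g := by
        nth_rewrite 2 [hk]
        simp only [smul_smul]
        ring_nf
    _ = 0 := by rw [diffElem_smul_eq_zero_iff.mpr h, smul_zero]

/-! ### Dilating a tiling -/

theorem sum_single_smul_apply (s : Finset ι) (w : ι → G) (g : G → ℤ) (x : G) :
    ((∑ i ∈ s, single (w i) (1 : ℤ)) • g) x = ∑ i ∈ s, g (x - w i) := by
  simp only [sum_smul, single_one_smul, Finset.sum_apply, translate_apply]

theorem sum_single_pow_smul_one (s : Finset ι) (w : ι → G) (n : ℕ) :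
    (∑ i ∈ s, single (w i) (1 : ℤ)) ^ n • (1 : G → ℤ) = (#s : ℤ) ^ n • (1 : G → ℤ) := by
  induction n with
  | zero => simp
  | succ n ih =>
    funext x
    rw [pow_succ', mul_smul, ih, sum_single_smul_apply]
    simp [pow_succ']

/-- In characteristic `p`, the Frobenius map sends `∑ i ∈ s, single (w i) 1` to
`∑ i ∈ s, single (p • w i) 1`. -/
theorem sum_single_prime_nsmul_smul_modEq {s : Finset ι} {w : ι → G} {t : G → ℤ}
    (h : (∑ i ∈ s, single (w i) (1 : ℤ)) • t = 1) {p : ℕ} (hp : p.Prime) (x : G) :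
    ((∑ i ∈ s, single (p • w i) (1 : ℤ)) • t) x ≡ (#s : ℤ) ^ (p - 1) [ZMOD p] := by
  obtain ⟨r, hr⟩ := exists_sum_pow_prime_eq hp s fun i => single (w i) (1 : ℤ)
  have hpow : ((∑ i ∈ s, single (w i) (1 : ℤ)) ^ p • t) x = (#s : ℤ) ^ (p - 1) := by
    rw [← Nat.succ_pred_eq_of_pos hp.pos, pow_succ, mul_smul, h, sum_single_pow_smul_one]
    simp
  rw [hr, add_smul, mul_smul, Nat.cast_smul_eq_nsmul] at hpow
  simp only [single_pow, one_pow, Pi.add_apply, nsmul_eq_mul] at hpow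
  rw [← hpow]
  exact (Int.modEq_add_fac_self).symm

/-- The sum lies between `0` and `#s < p`, so it is determined by its residue modulo `p`. -/
theorem sum_single_prime_nsmul_smul_eq_one {s : Finset ι} {w : ι → G} {t : G → ℤ}
    (ht : t ∈ Set.Icc 0 1) (h : (∑ i ∈ s, single (w i) (1 : ℤ)) • t = 1) {p : ℕ}
    (hp : p.Prime) (hsp : #s < p) : (∑ i ∈ s, single (p • w i) (1 : ℤ)) • t = 1 := by
  have hs : s.Nonempty := by
    rw [nonempty_iff_ne_empty]
    rintro rfl
    simpa using congrFun h 0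
  funext x
  have hcop : IsCoprime (#s : ℤ) p :=
    (Nat.isCoprime_iff_coprime.mpr (Nat.coprime_of_lt_prime hs.card_ne_zero hsp hp)).symm
  have hmod := (sum_single_prime_nsmul_smul_modEq h hp x).trans
    (Int.ModEq.pow_card_sub_one_eq_one hp hcop)
  rw [sum_single_smul_apply] at hmod ⊢
  have hnonneg : 0 ≤ ∑ i ∈ s, t (x - p • w i) := sum_nonneg fun i _ => ht.1 _
  have hlt : ∑ i ∈ s, t (x - p • w i) < p :=
    calc ∑ i ∈ s, t (x - p • w i) ≤ ∑ _i ∈ s, 1 := sum_le_sum fun i _ => ht.2 _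
      _ = #s := by simp
      _ < p := mod_cast hsp
  rwa [Int.ModEq, Int.emod_eq_of_lt hnonneg hlt,
    Int.emod_eq_of_lt zero_le_one (mod_cast hp.one_lt)] at hmod

theorem sum_single_nsmul_smul_eq_one {s : Finset ι} {w : ι → G} {t : G → ℤ}
    (ht : t ∈ Set.Icc 0 1) (h : (∑ i ∈ s, single (w i) (1 : ℤ)) • t = 1) {r : ℕ} (hr : r ≠ 0)
    (hlarge : ∀ p : ℕ, p.Prime → p ∣ r → #s < p) :
    (∑ i ∈ s, single (r • w i) (1 : ℤ)) • t = 1 := by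
  induction r using induction_on_primes with
  | zero => exact absurd rfl hr
  | one => simpa only [one_smul] using h
  | prime_mul p r hp ih =>
    have hdil := ih (right_ne_zero_of_mul hr) fun p' hp' h' => hlarge p' hp' (h'.mul_left p)
    simpa only [mul_smul] using
      sum_single_prime_nsmul_smul_eq_one ht hdil hp (hlarge p hp (dvd_mul_right p r))

/-! ### Averaging over dilations -/

/-- Summing the hypothesis over `k < N` and multiplying by the product leaves `N • h`, up to the
product, on the left and a telescoped, hence uniformly bounded, function on the right. -/
theorem prod_diffElem_smul_eq_zero_of_forall_eq_sum {t h : G → ℤ} (ht : BoundedFun t)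
    (s : Finset ι) (u w : ι → G)
    (hk : ∀ k : ℕ, h = (∑ i ∈ s, single (w i + k • u i) (1 : ℤ)) • t) :
    (∏ i ∈ s, diffElem (u i)) • h = 0 := by
  classical
  obtain ⟨B, hB⟩ := ht
  set D := ∏ i ∈ s, diffElem (u i)
  let c (i : ι) : ℤ[G] := (∏ j ∈ s.erase i, diffElem (u j)) * single (w i) 1
  have hgeom (N : ℕ) : N • h =
      (∑ i ∈ s, single (w i) (1 : ℤ) * ∑ k ∈ range N, single (k • u i) 1) • t := by
    rw [← card_range N, ← sum_const, sum_congr rfl fun k _ => hk k, ← sum_smul, sum_comm,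
      card_range]
    simp only [mul_sum, single_mul_single, one_mul]
  have htelescope (N : ℕ) : N • D • h = ∑ i ∈ s, c i • diffElem (N • u i) • t := by
    rw [smul_comm, hgeom, smul_smul, mul_sum, sum_smul]
    refine sum_congr rfl fun i hi => ?_
    rw [smul_smul, ← geom_sum_mul_diffElem,
      show D = _ from (prod_erase_mul s _ hi).symm]
    congr 1
    ring
  choose C hC using fun i => exists_forall_abs_smul_le (c i)
  refine funext fun x =>
    eq_zero_of_forall_abs_nsmul_le (C := ∑ i ∈ s, C i * (B + B)) fun N => ?_
  rw [← Pi.smul_apply, htelescope, Finset.sum_apply]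
  exact (abs_sum_le_sum_abs _ _).trans <| sum_le_sum fun i _ =>
    hC i _ _ (abs_diffElem_smul_le hB _) x

theorem prod_diffElem_smul_one_sub_eq_zero [DecidableEq G] {F : Finset G} {t : G → ℤ}
    (ht : t ∈ Set.Icc 0 1) (h : (∑ v ∈ F, single v (1 : ℤ)) • t = 1) {v₀ : G} (hv₀ : v₀ ∈ F) :
    (∏ v ∈ F.erase v₀, diffElem ((#F).factorial • (v - v₀))) • (1 - t) = 0 := by
  refine prod_diffElem_smul_eq_zero_of_forall_eq_sum (boundedFun_of_mem_Icc ht) _ _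
    (fun v => v - v₀) fun k => ?_
  set r := 1 + k * (#F).factorial with hr
  have hdil : (∑ v ∈ F, single (r • v) (1 : ℤ)) • t = 1 :=
    sum_single_nsmul_smul_eq_one ht h (by omega) fun p hp hpr =>
      lt_of_prime_dvd_one_add_mul_factorial hp hpr
  have hbase : (∑ v ∈ F, single (r • (v - v₀)) (1 : ℤ)) • t = 1 := by
    funext x
    have hx := congrFun hdil (x + r • v₀)
    rw [sum_single_smul_apply, Pi.one_apply] at hx
    rw [sum_single_smul_apply, Pi.one_apply, ← hx]
    refine sum_congr rfl fun v _ => congrArg t ?_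
    rw [smul_sub]
    abel
  have hsplit := add_sum_erase F (fun v => single (r • (v - v₀)) (1 : ℤ)) hv₀
  rw [sub_self, smul_zero, ← one_def] at hsplit
  rw [← hbase, ← hsplit, add_smul, one_smul, add_sub_cancel_left]
  simp only [hr, add_smul, one_smul, mul_smul]

/-! ### Splitting a set with vanishing mixed difference -/

theorem diffElem_smul_eq_zero_or {t : G → ℤ} (ht : t ∈ Set.Icc 0 1) {a b : G}
    (h : (diffElem a * diffElem b) • t = 0) (x : G) :
    (diffElem a • t) x = 0 ∨ (diffElem b • t) x = 0 := by
  have hx := congrFun h x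
  rw [mul_smul, diffElem_smul_apply, diffElem_smul_apply, diffElem_smul_apply,
    Pi.zero_apply] at hx
  simp only [diffElem_smul_apply]
  have h01 (y : G) : 0 ≤ t y ∧ t y ≤ 1 := ⟨ht.1 y, ht.2 y⟩
  have := h01 x
  have := h01 (x - a)
  have := h01 (x - b)
  have := h01 (x - a - b)
  omega

/-- `U` is the union of the cosets of `ℤ a` along which `T` is `a`-periodic. -/
theorem exists_periodic_inter_periodic_diff {T : Set G} {a b : G}
    (h : (diffElem a * diffElem b) • T.indicator (1 : G → ℤ) = 0) :
    ∃ U : Set G, Function.Periodic (· ∈ T ∩ U) a ∧ Function.Periodic (· ∈ T \ U) b := by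
  set t : G → ℤ := T.indicator 1
  have ha : Function.Periodic (diffElem b • t) a := by
    rwa [← diffElem_smul_eq_zero_iff, smul_smul]
  have hb : Function.Periodic (diffElem a • t) b := by
    rwa [← diffElem_smul_eq_zero_iff, smul_smul, mul_comm]
  let U : Set G := {x | ∀ n : ℤ, (diffElem a • t) (x + n • a) = 0}
  have hUa (x : G) : x + a ∈ U ↔ x ∈ U := by
    refine (Equiv.addRight (1 : ℤ)).forall_congr fun n => ?_
    rw [Equiv.coe_addRight, add_smul, one_smul, add_assoc, add_comm a]
  have hUb (x : G) : x + b ∈ U ↔ x ∈ U :=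
    forall_congr' fun n => by rw [add_right_comm, hb]
  refine ⟨U, fun x => propext ?_, fun x => propext ?_⟩
  · simp only [Set.mem_inter_iff, hUa]
    refine and_congr_left fun hx => ?_
    have h0 := (hUa x).mpr hx 0
    rw [zero_smul, add_zero, diffElem_smul_apply, add_sub_cancel_right, sub_eq_zero] at h0
    exact (indicator_one_eq_iff.mp h0).symm
  · simp only [Set.mem_sdiff, hUb]
    refine and_congr_left fun hx => ?_
    obtain ⟨n, hn⟩ := not_forall.mp (mt (hUb x).mp hx)
    have h0 := (diffElem_smul_eq_zero_or (indicator_one_mem_Icc T) h _).resolve_left hn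
    rw [ha.zsmul n, diffElem_smul_apply, add_sub_cancel_right, sub_eq_zero] at h0
    exact (indicator_one_eq_iff.mp h0).symm

end GroupRing

/-! ### Directions in the integer lattice -/

section Lattice

variable {ι : Type*}

attribute [local instance] convolutionModule

/-- The determinant of two lattice vectors; it vanishes exactly when they are parallel. -/
def cross (v w : ℤ × ℤ) : ℤ :=
  v.1 * w.2 - v.2 * w.1

theorem cross_zsmul_left (n : ℤ) (v w : ℤ × ℤ) : cross (n • v) w = n * cross v w := by
  simp only [cross, Prod.smul_fst, Prod.smul_snd, smul_eq_mul]
  ring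

theorem cross_zsmul_right (n : ℤ) (v w : ℤ × ℤ) : cross v (n • w) = n * cross v w := by
  simp only [cross, Prod.smul_fst, Prod.smul_snd, smul_eq_mul]
  ring

theorem cross_zsmul_eq_add (a d e : ℤ × ℤ) :
    cross d e • a = cross d a • e + cross a e • d := by
  ext <;> simp only [cross, Prod.smul_fst, Prod.smul_snd, Prod.fst_add, Prod.snd_add,
    smul_eq_mul] <;> ring

theorem exists_zsmul_eq_zsmul_of_cross_eq_zero {v d : ℤ × ℤ} (hd : d ≠ 0) (h : cross v d = 0) :
    ∃ m n : ℤ, m ≠ 0 ∧ m • v = n • d := by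
  have h' : v.1 * d.2 = v.2 * d.1 := sub_eq_zero.mp h
  rcases Prod.mk_eq_zero.not.mp hd |> not_and_or.mp with h1 | h2
  · refine ⟨d.1, v.1, h1, Prod.ext ?_ ?_⟩ <;>
      simp only [Prod.smul_fst, Prod.smul_snd, smul_eq_mul] <;> linarith
  · refine ⟨d.2, v.2, h2, Prod.ext ?_ ?_⟩ <;>
      simp only [Prod.smul_fst, Prod.smul_snd, smul_eq_mul] <;> linarith

/-- Some line parallel to `d` meets `F` in exactly one point. -/
def HasIsolatedPoint (F : Finset (ℤ × ℤ)) (d : ℤ × ℤ) : Prop :=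
  ∃ v₀ ∈ F, ∀ v ∈ F, v ≠ v₀ → cross d (v - v₀) ≠ 0

theorem toR_mem_span_of_cross_eq_zero {d v : ℤ × ℤ} (hd : d ≠ 0) (h : cross v d = 0) :
    toR v ∈ Submodule.span ℝ {toR d} := by
  obtain ⟨m, n, hm, hmn⟩ := exists_zsmul_eq_zsmul_of_cross_eq_zero hd h
  have hm' : (m : ℝ) ≠ 0 := mod_cast hm
  have h1 : (m : ℝ) * v.1 = n * d.1 := mod_cast congrArg Prod.fst hmn
  have h2 : (m : ℝ) * v.2 = n * d.2 := mod_cast congrArg Prod.snd hmn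
  refine Submodule.mem_span_singleton.mpr ⟨n / m, Prod.ext ?_ ?_⟩
  all_goals
    simp only [toR, Prod.smul_fst, Prod.smul_snd, smul_eq_mul]
    field_simp
    linarith

theorem cross_eq_zero_of_toR_mem_span {a d : ℤ × ℤ} (h : toR d ∈ Submodule.span ℝ {toR a}) :
    cross a d = 0 := by
  obtain ⟨r, hr⟩ := Submodule.mem_span_singleton.mp h
  have h1 : r * (a.1 : ℝ) = d.1 := congrArg Prod.fst hr
  have h2 : r * (a.2 : ℝ) = d.2 := congrArg Prod.snd hr
  have : (a.1 : ℝ) * d.2 - a.2 * d.1 = 0 := by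
    rw [← h1, ← h2]
    ring
  exact_mod_cast this

/-- A line without nonzero lattice vectors imposes no condition on `a`. -/
theorem exists_forall_span_eq_imp_cross_eq_zero (ℓ : Submodule ℝ (ℝ × ℝ)) :
    ∃ a : ℤ × ℤ, a ≠ 0 ∧ ∀ d, Submodule.span ℝ {toR d} = ℓ → cross a d = 0 := by
  by_cases h : ∃ a : ℤ × ℤ, a ≠ 0 ∧ Submodule.span ℝ {toR a} = ℓ
  · obtain ⟨a, ha, rfl⟩ := h
    exact ⟨a, ha, fun d hd => cross_eq_zero_of_toR_mem_span
      (hd ▸ Submodule.mem_span_singleton_self _)⟩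
  · push Not at h
    refine ⟨(1, 0), by simp, fun d hd => ?_⟩
    rw [not_imp_comm.mp (h d) (not_not.mpr hd)]
    rfl

theorem toR_eq_zero {d : ℤ × ℤ} : toR d = 0 ↔ d = 0 := by
  simp [toR, Prod.ext_iff]

theorem hasIsolatedPoint_of_span_notMem_dirSet {F : Finset (ℤ × ℤ)} {d : ℤ × ℤ} (hd : d ≠ 0)
    (h : Submodule.span ℝ {toR d} ∉ dirSet (F : Set (ℤ × ℤ))) : HasIsolatedPoint F d := by
  contrapose! h
  refine ⟨⟨toR d, toR_eq_zero.not.mpr hd, rfl⟩, fun a ⟨s, hs, hsa⟩ => ?_⟩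
  simp only [HasIsolatedPoint, not_exists, not_and, not_forall, not_not] at h
  obtain ⟨v, hv, hne, h0⟩ := h s hs
  refine ⟨s, hs, v, hv, hne.symm, hsa, ?_⟩
  have hvs : toR (v - s) ∈ Submodule.span ℝ {toR d} :=
    toR_mem_span_of_cross_eq_zero hd (by simp only [cross] at h0 ⊢; linarith)
  have : toR v - a = toR s - a + toR (v - s) := by
    ext <;> simp [toR]
  exact this ▸ Submodule.add_mem _ hsa hvs

/-- Modulo the annihilator of `c`, every `diffElem (e i)` divides `diffElem (m • a)`, so a power of
the latter kills `c`. -/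
theorem exists_periodic_zsmul_of_transverse {c : ℤ × ℤ → ℤ} (hc : BoundedFun c) {d : ℤ × ℤ}
    (hd : Function.Periodic c d) {s : Finset ι} {e : ι → ℤ × ℤ}
    (he : ∀ i ∈ s, cross d (e i) ≠ 0) (h : (∏ i ∈ s, diffElem (e i)) • c = 0) (a : ℤ × ℤ) :
    ∃ m : ℤ, m ≠ 0 ∧ Function.Periodic c (m • a) := by
  set m := ∏ i ∈ s, cross d (e i)
  refine ⟨m, prod_ne_zero_iff.mpr he, ?_⟩
  let π := Ideal.Quotient.mk (Ideal.torsionOf ℤ[ℤ × ℤ] (ℤ × ℤ → ℤ) c)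
  have hπ (f : ℤ[ℤ × ℤ]) : π f = 0 ↔ f • c = 0 := Ideal.Quotient.eq_zero_iff_mem
  have hdvd : ∀ i ∈ s, π (diffElem (e i)) ∣ π (diffElem (m • a)) := by
    intro i hi
    obtain ⟨k, hk⟩ : cross d (e i) ∣ m := dvd_prod_of_mem _ hi
    have hma : m • a = (k * cross d a) • e i + (k * cross a (e i)) • d := by
      rw [hk, mul_comm, mul_smul, cross_zsmul_eq_add, smul_add, mul_smul, mul_smul]
    have hperiod : π (diffElem ((k * cross a (e i)) • d)) = 0 :=
      (hπ _).mpr (diffElem_smul_eq_zero_iff.mpr (hd.zsmul _))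
    rw [hma, diffElem_add, map_add, map_mul, hperiod, mul_zero, zero_add]
    exact map_dvd π (diffElem_dvd_diffElem_zsmul _ _)
  have hpow : π (diffElem (m • a) ^ #s) = 0 := by
    rw [map_pow, ← prod_const, ← zero_dvd_iff, ← (hπ _).mpr h, map_prod]
    exact prod_dvd_prod_of_dvd _ _ hdvd
  exact diffElem_smul_eq_zero_iff.mp (hc.diffElem_smul_eq_zero_of_pow ((hπ _).mp hpow))

theorem exists_periodic_zsmul_of_hasIsolatedPoint {F : Finset (ℤ × ℤ)} {t : ℤ × ℤ → ℤ}
    (ht : t ∈ Set.Icc 0 1) (hF : (∑ v ∈ F, single v (1 : ℤ)) • t = 1) {f : ℤ[ℤ × ℤ]}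
    {d : ℤ × ℤ} (hd : Function.Periodic (f • (1 - t)) d) (hiso : HasIsolatedPoint F d)
    (a : ℤ × ℤ) : ∃ m : ℤ, m ≠ 0 ∧ Function.Periodic (f • (1 - t)) (m • a) := by
  obtain ⟨v₀, hv₀, hcross⟩ := hiso
  have hbdd : BoundedFun (f • (1 - t)) := (boundedFun_of_mem_Icc (one_sub_mem_Icc ht)).smul f
  refine exists_periodic_zsmul_of_transverse hbdd hd (s := F.erase v₀)
    (e := fun v => (#F).factorial • (v - v₀)) (fun v hv => ?_) ?_ a
  · rw [← natCast_zsmul, cross_zsmul_right]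
    exact mul_ne_zero (mod_cast (#F).factorial_ne_zero)
      (hcross v (mem_of_mem_erase hv) (ne_of_mem_erase hv))
  · rw [smul_comm, prod_diffElem_smul_one_sub_eq_zero ht hF hv₀, smul_zero]

theorem exists_periodic_zsmul_or {F : Finset (ℤ × ℤ)} {t : ℤ × ℤ → ℤ}
    (ht : t ∈ Set.Icc 0 1) (hF : (∑ v ∈ F, single v (1 : ℤ)) • t = 1) {f : ℤ[ℤ × ℤ]}
    {a b d : ℤ × ℤ} (hd0 : d ≠ 0) (hd : Function.Periodic (f • (1 - t)) d)
    (hdir : cross a d = 0 ∨ cross b d = 0 ∨ HasIsolatedPoint F d) :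
    ∃ m : ℤ, m ≠ 0 ∧ (Function.Periodic (f • (1 - t)) (m • a) ∨
      Function.Periodic (f • (1 - t)) (m • b)) := by
  have parallel {v : ℤ × ℤ} (h : cross v d = 0) :
      ∃ m : ℤ, m ≠ 0 ∧ Function.Periodic (f • (1 - t)) (m • v) := by
    obtain ⟨m, n, hm, hmn⟩ := exists_zsmul_eq_zsmul_of_cross_eq_zero hd0 h
    exact ⟨m, hm, hmn ▸ hd.zsmul n⟩
  rcases hdir with ha | hb | hiso
  · exact (parallel ha).imp fun m => And.imp_right .inl
  · exact (parallel hb).imp fun m => And.imp_right .inr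
  · exact (exists_periodic_zsmul_of_hasIsolatedPoint ht hF hd hiso a).imp
      fun m => And.imp_right .inl

theorem exists_diffElem_mul_diffElem_smul_one_sub_eq_zero {F : Finset (ℤ × ℤ)} {t : ℤ × ℤ → ℤ}
    (ht : t ∈ Set.Icc 0 1) (hF : (∑ v ∈ F, single v (1 : ℤ)) • t = 1) {s : Finset ι}
    {e : ι → ℤ × ℤ} (he : ∀ i ∈ s, e i ≠ 0) {a b : ℤ × ℤ} (ha : a ≠ 0) (hb : b ≠ 0)
    (hdir : ∀ i ∈ s, cross a (e i) = 0 ∨ cross b (e i) = 0 ∨ HasIsolatedPoint F (e i))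
    (h : (diffElem a * diffElem b * ∏ i ∈ s, diffElem (e i)) • (1 - t) = 0) :
    ∃ a' b' : ℤ × ℤ, a' ≠ 0 ∧ b' ≠ 0 ∧ (diffElem a' * diffElem b') • (1 - t) = 0 := by
  classical
  induction s using Finset.induction_on generalizing a b with
  | empty => exact ⟨a, b, ha, hb, by simpa using h⟩
  | insert i s hi ih =>
    have hdir' := fun j hj => hdir j (mem_insert_of_mem hj)
    have he' := fun j hj => he j (mem_insert_of_mem hj)
    have hbdd := boundedFun_of_mem_Icc (one_sub_mem_Icc ht)
    rw [prod_insert hi, mul_left_comm, mul_smul, diffElem_smul_eq_zero_iff] at h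
    obtain ⟨m, hm, hma | hmb⟩ := exists_periodic_zsmul_or ht hF (he i (mem_insert_self i s)) h
      (hdir i (mem_insert_self i s))
    · rw [mul_assoc] at hma
      refine ih he' (smul_ne_zero hm ha) hb (fun j hj => ?_) ?_
      · simpa only [cross_zsmul_left, mul_eq_zero, hm, false_or] using hdir' j hj
      · rw [mul_assoc]
        exact hbdd.diffElem_zsmul_mul_smul_eq_zero hma
    · rw [mul_comm (diffElem a), mul_assoc] at hmb
      refine ih he' ha (smul_ne_zero hm hb) (fun j hj => ?_) ?_
      · simpa only [cross_zsmul_left, mul_eq_zero, hm, false_or] using hdir' j hj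
      · rw [mul_comm (diffElem a), mul_assoc]
        exact hbdd.diffElem_zsmul_mul_smul_eq_zero hmb

theorem IsTiling.sum_single_smul_indicator_eq_one {F : Finset (ℤ × ℤ)} {T : Set (ℤ × ℤ)}
    (hT : IsTiling F T) : (∑ v ∈ F, single v (1 : ℤ)) • T.indicator (1 : ℤ × ℤ → ℤ) = 1 := by
  funext x
  obtain ⟨⟨t, v⟩, ⟨ht, hv, hx⟩, huniq⟩ := hT x
  have hxv : x - v = t := sub_eq_of_eq_add hx
  rw [sum_single_smul_apply, sum_eq_single_of_mem v hv fun w hw hwv => ?_, hxv,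
    Set.indicator_of_mem ht]
  · rfl
  · refine Set.indicator_of_notMem (fun hmem => hwv ?_) _
    exact congrArg Prod.snd (huniq (x - w, w) ⟨hmem, hw, (sub_add_cancel x w).symm⟩)

theorem onePeriodicSet_of_periodic {S : Set (ℤ × ℤ)} {g : ℤ × ℤ} (hg : g ≠ 0)
    (h : Function.Periodic (· ∈ S) g) : OnePeriodicSet S := by
  refine ⟨g, hg, Set.ext fun x => ?_⟩
  rw [Set.image_add_right, Set.mem_preimage]
  exact iff_of_eq (h.neg x)

theorem IsTiling.exists_diffElem_mul_diffElem_smul_indicator_eq_zero {F : Finset (ℤ × ℤ)}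
    {T : Set (ℤ × ℤ)} (hT : IsTiling F T) {v₀ : ℤ × ℤ} (hv₀ : v₀ ∈ F) {a b : ℤ × ℤ}
    (ha : a ≠ 0) (hb : b ≠ 0)
    (hdir : ∀ d ≠ 0, cross a d = 0 ∨ cross b d = 0 ∨ HasIsolatedPoint F d) :
    ∃ a' b' : ℤ × ℤ, a' ≠ 0 ∧ b' ≠ 0 ∧
      (diffElem a' * diffElem b') • T.indicator (1 : ℤ × ℤ → ℤ) = 0 := by
  have ht := indicator_one_mem_Icc T
  have hsum := hT.sum_single_smul_indicator_eq_one
  have he : ∀ v ∈ F.erase v₀, (#F).factorial • (v - v₀) ≠ 0 := fun v hv =>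
    smul_ne_zero (#F).factorial_ne_zero (sub_ne_zero.mpr (ne_of_mem_erase hv))
  obtain ⟨a', b', ha', hb', h⟩ := exists_diffElem_mul_diffElem_smul_one_sub_eq_zero ht hsum he
    ha hb (fun v hv => hdir _ (he v hv))
    (by rw [mul_smul, prod_diffElem_smul_one_sub_eq_zero ht hsum hv₀, smul_zero])
  refine ⟨a', b', ha', hb', ?_⟩
  rwa [smul_sub, mul_smul, diffElem_smul_one, smul_zero, zero_sub, neg_eq_zero] at h

end Lattice

/-- If `F` is a cluster whose direction set contains at most two lines
and `T` is an `F`-tiling, then `T` is a disjoint union `T₁ ∪ T₂` where each `Tᵢ` is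
either empty or `1`-periodic. -/
theorem stmt7 (F : Finset (ℤ × ℤ)) (hF : F.Nonempty)
    (hdir : ∃ ℓ₁ ℓ₂ : Submodule ℝ (ℝ × ℝ), dirSet (F : Set (ℤ × ℤ)) ⊆ {ℓ₁, ℓ₂})
    (T : Set (ℤ × ℤ)) (hT : IsTiling F T) :
    ∃ T₁ T₂ : Set (ℤ × ℤ), T = T₁ ∪ T₂ ∧ T₁ ∩ T₂ = ∅ ∧
      (T₁ = ∅ ∨ OnePeriodicSet T₁) ∧ (T₂ = ∅ ∨ OnePeriodicSet T₂) := by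
  obtain ⟨ℓ₁, ℓ₂, hℓ⟩ := hdir
  obtain ⟨v₀, hv₀⟩ := hF
  obtain ⟨a, ha, hcross_a⟩ := exists_forall_span_eq_imp_cross_eq_zero ℓ₁
  obtain ⟨b, hb, hcross_b⟩ := exists_forall_span_eq_imp_cross_eq_zero ℓ₂
  have hisolated : ∀ d ≠ 0, cross a d = 0 ∨ cross b d = 0 ∨ HasIsolatedPoint F d := by
    intro d hd
    by_cases hmem : Submodule.span ℝ {toR d} ∈ dirSet (F : Set (ℤ × ℤ))
    · exact (hℓ hmem).imp (hcross_a d) fun h => .inl (hcross_b d h)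
    · exact .inr (.inr (hasIsolatedPoint_of_span_notMem_dirSet hd hmem))
  obtain ⟨a', b', ha', hb', h⟩ :=
    hT.exists_diffElem_mul_diffElem_smul_indicator_eq_zero hv₀ ha hb hisolated
  obtain ⟨U, hUa, hUb⟩ := exists_periodic_inter_periodic_diff h
  exact ⟨T ∩ U, T \ U, (Set.inter_union_sdiff T U).symm,
    Set.disjoint_sdiff_inter.symm.inter_eq,
    .inr (onePeriodicSet_of_periodic ha' hUa), .inr (onePeriodicSet_of_periodic hb' hUb)⟩
end
end

section
/- Let p be a prime, F ⊆ ℤ² a cluster of cardinality p², and T an F-tiling. Then the orbit closure of the indicator configuration 1_T contains a point x that can be written as x = x₁ + x₂ (pointwise sum), where x₁, x₂ : ℤ² → {0,1} have disjoint supports and each xᵢ is either identically zero or 1-periodic. -/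
/-!
The point of the orbit closure can be taken to be `1_T` itself. Let the group ring `ℂ[ℤ²]`, with
monomials `X ^ v`, act on configurations by translation. The tiling equation says that
`∑ v ∈ F, X ^ v` maps `1_T` to the constant `1`. By the Frobenius endomorphism modulo the prime
factors of `n`, so does `∑ v ∈ F, X ^ (n • v)` for every `n` coprime to `|F|`, in particular for
every `n ≡ 1` modulo `p`.

In the residue field of a prime ideal containing the annihilator of `1_T`, the monomials define a
character `z` which is trivial or satisfies `∑ v ∈ F, z v ^ n = 0` for all these `n`. In the second
case, the points of `F` with a given value of `z ^ p` give a vanishing sum of `p`-th roots of unity,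
up to a common factor, so their number is divisible by `p`. Hence either `ker (z ^ p)` has rank two,
or it has rank one and every line in its direction that meets `F` contains at least `p` points of
`F`. As `|F| ≤ p ^ 2`, at most two directions are rich in this sense. If `A` and `B` are nonzero
vectors covering these directions, `z A` or `z B` is always a root of unity.

Since there are only finitely many minimal primes over the annihilator, a power of
`(X ^ (n • A) - 1) * (X ^ (n • B) - 1)` annihilates `1_T` for some `n > 0`. A bounded function that
is polynomial along a line is constant on it, so the exponent can be dropped, and a `{0, 1}`-valued
function with vanishing mixed difference is cut into two periodic pieces by the set where it is
invariant along the first direction.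
-/

noncomputable section

def IsBinary (c : ℤ × ℤ → ℂ) : Prop := ∀ u, c u = 0 ∨ c u = 1

def shift (g : ℤ × ℤ) (c : ℤ × ℤ → ℂ) : ℤ × ℤ → ℂ := fun u => c (u - g)

def OnePeriodic (c : ℤ × ℤ → ℂ) : Prop := ∃ g : ℤ × ℤ, g ≠ 0 ∧ shift g c = c

/-- The orbit closure of a configuration: the closure of its translation orbit in the
product topology (for a `{0,1}`-valued configuration this coincides with the closure in
`{0,1}^{ℤ²}` with `{0,1}` discrete). -/
def orbitClosure (c : ℤ × ℤ → ℂ) : Set (ℤ × ℤ → ℂ) :=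
  closure {y | ∃ g : ℤ × ℤ, y = shift g c}

open scoped fwdDiff AddMonoidAlgebra Finset

section Convolution

variable {R G ι : Type*} [CommRing R] [AddCommGroup G]

/-- The action of `G` by translations on functions `G → R`, with the sign for which
`translation R G v` moves a function forward by `v`. -/
def translation (R G : Type*) [CommRing R] [AddCommGroup G] :
    Multiplicative G →* Module.End R (G → R) where
  toFun v := LinearMap.funLeft R R (· - v.toAdd)
  map_one' := by ext; simp
  map_mul' v w := by
    refine LinearMap.ext fun c => funext fun u => ?_
    simp [LinearMap.funLeft_apply, sub_sub]

/-- The convolution action of the group ring `R[G]` on functions `G → R`, which turns linear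
relations between translates of a function into algebra in `R[G]`. -/
def convolve (R G : Type*) [CommRing R] [AddCommGroup G] : R[G] →ₐ[R] Module.End R (G → R) :=
  AddMonoidAlgebra.lift R _ G (translation R G)

lemma convolve_single_one (v : G) (c : G → R) (u : G) :
    convolve R G (.single v 1) c u = c (u - v) := by
  simp [convolve, translation]

lemma convolve_sum_single_one (s : Finset ι) (v : ι → G) (c : G → R) (u : G) :
    convolve R G (∑ i ∈ s, .single (v i) 1) c u = ∑ i ∈ s, c (u - v i) := by
  simp only [map_sum, LinearMap.sum_apply, Finset.sum_apply, convolve_single_one]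

lemma convolve_single_one_sub_one (v : G) (c : G → R) :
    convolve R G (.single v 1 - 1) c = Δ_[-v] c := by
  funext u
  rw [map_sub, map_one, LinearMap.sub_apply, Pi.sub_apply, convolve_single_one,
    Module.End.one_apply, fwdDiff, sub_eq_add_neg u]

lemma convolve_single_one_sub_one_pow (v : G) (n : ℕ) (c : G → R) :
    convolve R G ((.single v 1 - 1) ^ n) c = (Δ_[-v])^[n] c := by
  rw [map_pow, Module.End.pow_apply]
  exact congrArg (fun D : (G → R) → G → R => D^[n] c) (funext (convolve_single_one_sub_one v))

/-- The ideal of those elements of the group ring `R[G]` whose convolution with `c` vanishes, that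
is, of the linear relations between the translates of `c`. -/
def annihilator (c : G → R) : Ideal R[G] where
  carrier := {f | convolve R G f c = 0}
  zero_mem' := by simp
  add_mem' {f g} hf hg := by simp_all
  smul_mem' r g hg := by simp_all

lemma mem_annihilator {c : G → R} {f : R[G]} : f ∈ annihilator c ↔ convolve R G f c = 0 :=
  Iff.rfl

end Convolution

section Dilation

variable {R G ι : Type*} [AddCommGroup G] (s : Finset ι)

-- In characteristic `q` the Frobenius turns `f = ∑ i, X ^ v i` into `f ^ q = ∑ i, X ^ (q • v i)`,
-- and `f * c = 1` gives `f ^ q * c = f ^ (q - 1) * 1`.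
lemma sum_sub_nsmul_eq_card_pow [CommRing R] (q : ℕ) [Fact q.Prime] [CharP R q] (v : ι → G)
    {c : G → R} (h : ∀ u, ∑ i ∈ s, c (u - v i) = 1) (u : G) :
    ∑ i ∈ s, c (u - q • v i) = (#s : R) ^ (q - 1) := by
  have : CharP R[G] q :=
    charP_of_injective_algebraMap (FaithfulSMul.algebraMap_injective R R[G]) q
  set f : R[G] := ∑ i ∈ s, .single (v i) 1 with hf
  have frobenius : f ^ q = ∑ i ∈ s, .single (q • v i) 1 := by
    simp only [hf, sum_pow_char, AddMonoidAlgebra.single_pow, one_pow]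
  have convolve_pow_succ (m : ℕ) : convolve R G (f ^ (m + 1)) c = fun _ => (#s : R) ^ m := by
    induction m with
    | zero => funext u; rw [zero_add, pow_one, pow_zero, hf, convolve_sum_single_one, h]
    | succ m ih =>
      funext u
      rw [pow_succ', map_mul, Module.End.mul_apply, ih, hf, convolve_sum_single_one,
        Finset.sum_const, nsmul_eq_mul, pow_succ']
  rw [← convolve_sum_single_one, ← frobenius,
    ← Nat.sub_add_cancel (Fact.out : q.Prime).one_le, convolve_pow_succ, Nat.add_sub_cancel]

-- The sum is `1` modulo `q`, hence positive, and its average over the translates by `v j` is `1`.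
lemma sum_sub_prime_nsmul_eq_one {q : ℕ} (hq : q.Prime) (hqs : ¬ q ∣ #s) (v : ι → G)
    {c : G → ℕ} (h : ∀ u, ∑ i ∈ s, c (u - v i) = 1) (u : G) :
    ∑ i ∈ s, c (u - q • v i) = 1 := by
  have := Fact.mk hq
  have modEq_one (w : G) : ((∑ i ∈ s, c (w - q • v i) : ℕ) : ZMod q) = 1 := by
    have hcard : (#s : ZMod q) ≠ 0 := by rwa [Ne, ZMod.natCast_eq_zero_iff]
    rw [Nat.cast_sum, sum_sub_nsmul_eq_card_pow s q v (c := fun w => (c w : ZMod q))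
      (fun w => mod_cast congrArg (Nat.cast : ℕ → ZMod q) (h w)),
      ZMod.pow_card_sub_one_eq_one hcard]
  have one_le (w : G) : 1 ≤ ∑ i ∈ s, c (w - q • v i) := by
    refine Nat.one_le_iff_ne_zero.2 fun h0 => zero_ne_one (α := ZMod q) ?_
    rw [← modEq_one w, h0, Nat.cast_zero]
  obtain ⟨j₀, hj₀⟩ : s.Nonempty := Finset.nonempty_iff_ne_empty.2 fun hs => hqs (by simp [hs])
  have sum_eq_card : ∑ _j ∈ s, 1 = ∑ j ∈ s, ∑ i ∈ s, c (u + v j₀ - v j - q • v i) := by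
    rw [Finset.sum_comm]
    simp only [sub_right_comm _ (v _), h]
  have eq_one := (Finset.sum_eq_sum_iff_of_le fun j _ => one_le (u + v j₀ - v j)).1 sum_eq_card
  simpa only [add_sub_cancel_right] using (eq_one j₀ hj₀).symm

theorem sum_sub_nsmul_eq_one (v : ι → G) {c : G → ℕ}
    (h : ∀ u, ∑ i ∈ s, c (u - v i) = 1) (n : ℕ) (hn : n.Coprime #s) :
    ∀ u, ∑ i ∈ s, c (u - n • v i) = 1 := by
  induction n using induction_on_primes with
  | zero =>
    obtain ⟨j, rfl⟩ := Finset.card_eq_one.1 ((Nat.coprime_zero_left _).1 hn)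
    intro u
    simpa using h (u + v j)
  | one => simpa only [one_nsmul] using h
  | prime_mul q a hq ih =>
    obtain ⟨hqs, has⟩ := Nat.coprime_mul_iff_left.1 hn
    simpa only [mul_nsmul'] using
      sum_sub_prime_nsmul_eq_one s hq (hq.coprime_iff_not_dvd.1 hqs) (fun i => a • v i) (ih has)

end Dilation

section PowerSums

variable {K G ι : Type*}

lemma sum_filter_eq_zero_of_forall_sum_mul_pow_eq_zero [CommRing K] [IsDomain K] [DecidableEq K]
    (s : Finset ι) (a b : ι → K) (h : ∀ k : ℕ, ∑ i ∈ s, a i * b i ^ k = 0) (w : K) :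
    ∑ i ∈ s with b i = w, a i = 0 := by
  have powers_linearIndependent : LinearIndependent K fun (x : K) (k : Multiplicative ℕ) =>
      x ^ k.toAdd :=
    (linearIndependent_monoidHom (Multiplicative ℕ) K).comp (powersHom K) (powersHom K).injective
  by_cases hw : w ∈ s.image b
  · refine linearIndependent_iff'.1 powers_linearIndependent (s.image b)
      (fun x => ∑ i ∈ s with b i = x, a i) (funext fun k => ?_) w hw
    rw [Finset.sum_apply, Pi.zero_apply, ← h k.toAdd,
      ← Finset.sum_fiberwise_of_maps_to (fun i hi => Finset.mem_image_of_mem b hi)]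
    refine Finset.sum_congr rfl fun x _ => ?_
    rw [Pi.smul_apply, smul_eq_mul, Finset.sum_mul]
    exact Finset.sum_congr rfl fun i hi => by rw [(Finset.mem_filter.1 hi).2]
  · rw [Finset.filter_false_of_mem fun i hi hiw => hw (Finset.mem_image.2 ⟨i, hi, hiw⟩),
      Finset.sum_empty]

-- The `p`-th cyclotomic polynomial divides `∑ i, X ^ e i`, where `y i = ζ ^ e i`; evaluate at `1`.
lemma prime_dvd_card_of_sum_eq_zero [Field K] [CharZero K] {p : ℕ} (hp : p.Prime)
    (s : Finset ι) (y : ι → K) (hy : ∀ i ∈ s, y i ^ p = 1) (h : ∑ i ∈ s, y i = 0) : p ∣ #s := by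
  have := Fact.mk hp
  have : NeZero p := ⟨hp.ne_zero⟩
  by_cases hall : ∀ i ∈ s, y i = 1
  · have : #s = 0 := by simpa [Finset.sum_congr rfl hall] using h
    simp [this]
  push Not at hall
  obtain ⟨j, hj, hj1⟩ := hall
  have hζ : IsPrimitiveRoot (y j) p :=
    orderOf_eq_prime (hy j hj) hj1 ▸ IsPrimitiveRoot.orderOf (y j)
  choose! e _ he using fun i hi => hζ.eq_pow_of_pow_eq_one (hy i hi)
  have aeval_eq_zero :
      Polynomial.aeval (y j) (∑ i ∈ s, (Polynomial.X : Polynomial ℤ) ^ e i) = 0 := by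
    simpa only [map_sum, map_pow, Polynomial.aeval_X, Finset.sum_congr rfl he] using h
  have cyclotomic_dvd := minpoly.isIntegrallyClosed_dvd (hζ.isIntegral hp.pos) aeval_eq_zero
  rw [← Polynomial.cyclotomic_eq_minpoly hζ hp.pos] at cyclotomic_dvd
  have eval_dvd := Polynomial.eval_dvd (x := 1) cyclotomic_dvd
  simp only [Polynomial.eval_one_cyclotomic_prime, Polynomial.eval_finsetSum, Polynomial.eval_pow,
    Polynomial.eval_X, one_pow, Finset.sum_const, nsmul_eq_mul, mul_one] at eval_dvd
  exact_mod_cast eval_dvd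

lemma prime_dvd_card_filter_apply_pow_eq [Field K] [CharZero K] [DecidableEq K] [AddGroup G]
    {p : ℕ} (hp : p.Prime) (z : AddChar G K) (F : Finset G)
    (h : ∀ k : ℕ, ∑ v ∈ F, z v ^ (1 + p * k) = 0) (v₀ : G) :
    p ∣ #{v ∈ F | z v ^ p = z v₀ ^ p} := by
  have hz₀ : z v₀ ≠ 0 := (z.val_isUnit v₀).ne_zero
  refine prime_dvd_card_of_sum_eq_zero hp _ (fun v => z v / z v₀) (fun v hv => ?_) ?_
  · rw [div_pow, (Finset.mem_filter.1 hv).2, div_self (pow_ne_zero p hz₀)]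
  · rw [← Finset.sum_div, sum_filter_eq_zero_of_forall_sum_mul_pow_eq_zero F z (z · ^ p)
      (by simpa only [pow_add, pow_one, pow_mul] using h), zero_div]

end PowerSums

section Plane

lemma exists_apply_eq_and_apply_eq_of_card_le_mul {α β γ : Type*} [DecidableEq β] [DecidableEq γ]
    {F : Finset α} {f : α → β} {g : α → γ} {m n : ℕ}
    (hfg : ∀ v ∈ F, ∀ w ∈ F, f v = f w → g v = g w → v = w)
    (hf : ∀ a ∈ F, m ≤ #{v ∈ F | f v = f a}) (hg : ∀ b ∈ F, n ≤ #{v ∈ F | g v = g b})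
    (hF : #F ≤ m * n) {a b : α} (ha : a ∈ F) (hb : b ∈ F) :
    ∃ q ∈ F, f q = f a ∧ g q = g b := by
  have n_pos : 0 < n := Nat.pos_of_mul_pos_left ((Finset.card_pos.2 ⟨a, ha⟩).trans_le hF)
  have card_image_le : #(F.image g) ≤ m := by
    refine le_of_mul_le_mul_left ((Finset.mul_card_image_le_card F n ?_).trans
      (hF.trans_eq (mul_comm m n))) n_pos
    simpa only [Finset.forall_mem_image] using hg
  have card_image_fiber : #({v ∈ F | f v = f a}.image g) = #{v ∈ F | f v = f a} := by
    refine Finset.card_image_of_injOn fun v hv w hw => ?_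
    obtain ⟨hvF, hva⟩ := Finset.mem_filter.1 hv
    obtain ⟨hwF, hwa⟩ := Finset.mem_filter.1 hw
    exact hfg v hvF w hwF (hva.trans hwa.symm)
  have image_fiber_eq : {v ∈ F | f v = f a}.image g = F.image g :=
    Finset.eq_of_subset_of_card_le (Finset.image_subset_image (Finset.filter_subset _ F))
      (card_image_le.trans ((hf a ha).trans_eq card_image_fiber.symm))
  obtain ⟨q, hq, hqb⟩ := Finset.mem_image.1 (image_fiber_eq ▸ Finset.mem_image_of_mem g hb)
  exact ⟨q, (Finset.mem_filter.1 hq).1, (Finset.mem_filter.1 hq).2, hqb⟩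

variable {R : Type*} [CommRing R]

/-- The determinant of the vectors `d` and `v` of `R²`, as a linear form in `v`. The lines of
direction `d` are its level sets. -/
def det2 (d : R × R) : R × R →ₗ[R] R :=
  d.1 • LinearMap.snd R R R - d.2 • LinearMap.fst R R R

lemma det2_apply (d v : R × R) : det2 d v = d.1 * v.2 - d.2 * v.1 := rfl

lemma det2_eq_neg_det2 (d e : R × R) : det2 d e = -det2 e d := by
  simp only [det2_apply]; ring

lemma det2_mul_det2 (d e g v : R × R) :
    det2 d e * det2 g v = det2 g e * det2 d v + det2 d g * det2 e v := by
  simp only [det2_apply]; ring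

lemma det2_smul_eq (d e v : R × R) : det2 d e • v = det2 d v • e - det2 e v • d := by
  ext <;> simp only [det2_apply, Prod.smul_fst, Prod.smul_snd, Prod.fst_sub, Prod.snd_sub,
    smul_eq_mul] <;> ring

lemma eq_of_det2_eq_of_det2_eq [IsDomain R] {d e v w : R × R} (hde : det2 d e ≠ 0)
    (hd : det2 d v = det2 d w) (he : det2 e v = det2 e w) : v = w :=
  smul_right_injective (R × R) hde (by simp only [det2_smul_eq d e, hd, he])

/-- `d` is a rich direction of `F` with multiplicity `m` if every line of direction `d` that meets
`F` contains at least `m` points of `F`. -/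
def IsRichDirection [DecidableEq R] (m : ℕ) (F : Finset (R × R)) (d : R × R) : Prop :=
  ∀ v₀ ∈ F, m ≤ #{v ∈ F | det2 d v = det2 d v₀}

variable [LinearOrder R] [IsStrictOrderedRing R]

lemma exists_forall_ne_mul_add_mul_lt {α : Type*} {F : Finset α} (hF : F.Nonempty) {f g : α → R}
    (hfg : ∀ v ∈ F, ∀ w ∈ F, f v = f w → g v = g w → v = w)
    (hgrid : ∀ a ∈ F, ∀ b ∈ F, ∃ q ∈ F, f q = f a ∧ g q = g b) {s t : R} (hs : s ≠ 0)
    (ht : t ≠ 0) : ∃ q ∈ F, ∀ v ∈ F, v ≠ q → s * f v + t * g v < s * f q + t * g q := by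
  obtain ⟨a, ha, hfa⟩ := F.exists_max_image (s * f ·) hF
  obtain ⟨b, hb, hgb⟩ := F.exists_max_image (t * g ·) hF
  obtain ⟨q, hq, hqa, hqb⟩ := hgrid a ha b hb
  refine ⟨q, hq, fun v hv hvq => ?_⟩
  rw [hqa, hqb]
  by_cases hva : f v = f a
  · have hvb : g v ≠ g b := fun hvb => hvq (hfg v hv q hq (hva.trans hqa.symm) (hvb.trans hqb.symm))
    exact add_lt_add_of_le_of_lt (hfa v hv) ((hgb v hv).lt_of_ne (by simpa [ht] using hvb))
  · exact add_lt_add_of_lt_of_le ((hfa v hv).lt_of_ne (by simpa [hs] using hva)) (hgb v hv)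

-- Two rich directions make `F` an affine image of an `m × m` grid. A linear form that is constant
-- along neither of them has a strict maximum on the grid, so its level line there is not rich.
lemma det2_eq_zero_of_isRichDirection {m : ℕ} (hm : 2 ≤ m) {F : Finset (R × R)} (hF : F.Nonempty)
    (hcard : #F ≤ m * m) {d e g : R × R} (hd : IsRichDirection m F d) (he : IsRichDirection m F e)
    (hg : IsRichDirection m F g) (hde : det2 d e ≠ 0) (hgd : det2 g d ≠ 0) : det2 g e = 0 := by
  by_contra hge
  have hdg : det2 d g ≠ 0 := by rwa [det2_eq_neg_det2, neg_ne_zero]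
  have hinj : ∀ v ∈ F, ∀ w ∈ F, det2 d v = det2 d w → det2 e v = det2 e w → v = w :=
    fun v _ w _ => eq_of_det2_eq_of_det2_eq hde
  obtain ⟨q, hq, hmax⟩ := exists_forall_ne_mul_add_mul_lt hF hinj (fun a ha b hb =>
    exists_apply_eq_and_apply_eq_of_card_le_mul hinj hd he hcard ha hb) hge hdg
  have line_eq : {v ∈ F | det2 g v = det2 g q} = {q} := by
    refine Finset.eq_singleton_iff_unique_mem.2 ⟨by simpa using hq, fun v hv => ?_⟩
    obtain ⟨hvF, hvq⟩ := Finset.mem_filter.1 hv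
    by_contra hne
    refine (hmax v hvF hne).ne ?_
    rw [← det2_mul_det2, ← det2_mul_det2, hvq]
  have := hg q hq
  rw [line_eq, Finset.card_singleton] at this
  exact absurd (hm.trans this) (by norm_num)

lemma exists_forall_isRichDirection_det2_eq_zero {m : ℕ} (hm : 2 ≤ m) {F : Finset (R × R)}
    (hF : F.Nonempty) (hcard : #F ≤ m * m) :
    ∃ A B : R × R, A ≠ 0 ∧ B ≠ 0 ∧
      ∀ d ≠ 0, IsRichDirection m F d → det2 d A = 0 ∨ det2 d B = 0 := by
  by_cases hA : ∃ A ≠ 0, IsRichDirection m F A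
  swap
  · exact ⟨1, 1, one_ne_zero, one_ne_zero, fun d hd hdF => absurd ⟨d, hd, hdF⟩ hA⟩
  obtain ⟨A, hA0, hA⟩ := hA
  by_cases hB : ∃ B, IsRichDirection m F B ∧ det2 A B ≠ 0
  · obtain ⟨B, hB, hAB⟩ := hB
    have hB0 : B ≠ 0 := by rintro rfl; exact hAB (map_zero _)
    exact ⟨A, B, hA0, hB0, fun d _ hd => or_iff_not_imp_left.2 fun hdA =>
      det2_eq_zero_of_isRichDirection hm hF hcard hA hB hd hAB hdA⟩
  · refine ⟨A, A, hA0, hA0, fun d _ hd => Or.inl ?_⟩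
    by_contra hdA
    exact hB ⟨d, hd, by rwa [det2_eq_neg_det2, neg_ne_zero]⟩

end Plane

section Submodule

variable {R : Type*} [CommRing R] {H : Submodule R (R × R)} {v w : R × R}

lemma exists_smul_mem_of_det2_eq_zero (hw : w ∈ H) (hw0 : w ≠ 0) (h : det2 w v = 0) :
    ∃ n : R, n ≠ 0 ∧ n • v ∈ H := by
  rw [det2_apply, sub_eq_zero] at h
  rcases not_and_or.1 (Prod.ext_iff.not.1 hw0) with hw1 | hw2
  · refine ⟨w.1, hw1, ?_⟩
    rw [show w.1 • v = v.1 • w from Prod.ext (mul_comm _ _) (h.trans (mul_comm _ _))]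
    exact H.smul_mem _ hw
  · refine ⟨w.2, hw2, ?_⟩
    rw [show w.2 • v = v.2 • w from Prod.ext (h.symm.trans (mul_comm _ _)) (mul_comm _ _)]
    exact H.smul_mem _ hw

lemma exists_smul_mem_of_det2_ne_zero {w' : R × R} (hw : w ∈ H) (hw' : w' ∈ H)
    (h : det2 w w' ≠ 0) (v : R × R) : ∃ n : R, n ≠ 0 ∧ n • v ∈ H :=
  ⟨det2 w w', h, det2_smul_eq w w' v ▸ H.sub_mem (H.smul_mem _ hw') (H.smul_mem _ hw)⟩

end Submodule

section Characters

lemma isOfFinOrder_of_apply_zsmul_pow_eq_one {K G : Type*} [Field K] [AddGroup G]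
    (z : AddChar G K) {n : ℤ} (hn : n ≠ 0) {m : ℕ} (hm : m ≠ 0) {v : G}
    (h : z (n • v) ^ m = 1) : IsOfFinOrder (z v) := by
  refine isOfFinOrder_iff_pow_eq_one.2 ⟨n.natAbs * m, by positivity, ?_⟩
  rw [z.map_zsmul_eq_zpow] at h
  obtain ⟨n, rfl | rfl⟩ := n.eq_nat_or_neg <;> simpa [pow_mul] using h

lemma isOfFinOrder_or_isOfFinOrder_of_forall_sum_pow_eq_zero {K : Type*} [Field K] [CharZero K]
    {p : ℕ} (hp : p.Prime) {F : Finset (ℤ × ℤ)} (hF : F.Nonempty) {A B : ℤ × ℤ}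
    (hAB : ∀ d ≠ 0, IsRichDirection p F d → det2 d A = 0 ∨ det2 d B = 0)
    (z : AddChar (ℤ × ℤ) K) (h : ∀ k : ℕ, ∑ v ∈ F, z v ^ (1 + p * k) = 0) :
    IsOfFinOrder (z A) ∨ IsOfFinOrder (z B) := by
  classical
  let H : Submodule ℤ (ℤ × ℤ) := AddSubgroup.toIntSubmodule (z ^ p).toAddMonoidHom.ker
  have mem_H (v : ℤ × ℤ) : v ∈ H ↔ z v ^ p = 1 := Iff.rfl
  have sub_mem_H {v w : ℤ × ℤ} (hvw : z v ^ p = z w ^ p) : v - w ∈ H := by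
    rw [mem_H, z.map_sub_eq_div, div_pow, hvw, div_self (pow_ne_zero p (z.val_isUnit w).ne_zero)]
  have isOfFinOrder {C : ℤ × ℤ} : (∃ n : ℤ, n ≠ 0 ∧ n • C ∈ H) → IsOfFinOrder (z C) :=
    fun ⟨_, hn, hnC⟩ => isOfFinOrder_of_apply_zsmul_pow_eq_one z hn hp.ne_zero hnC
  have le_card_class (v₀ : ℤ × ℤ) (hv₀ : v₀ ∈ F) : p ≤ #{v ∈ F | z v ^ p = z v₀ ^ p} :=
    Nat.le_of_dvd (Finset.card_pos.2 ⟨v₀, by simpa using hv₀⟩)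
      (prime_dvd_card_filter_apply_pow_eq hp z F h v₀)
  obtain ⟨d, hd, hd0⟩ : ∃ d ∈ H, d ≠ 0 := by
    obtain ⟨v₀, hv₀⟩ := hF
    obtain ⟨v, hv, hne⟩ := Finset.exists_mem_ne (hp.one_lt.trans_le (le_card_class v₀ hv₀)) v₀
    exact ⟨v - v₀, sub_mem_H (Finset.mem_filter.1 hv).2, sub_ne_zero.2 hne⟩
  by_cases hdet : ∃ w ∈ H, det2 d w ≠ 0
  · obtain ⟨w, hw, hdw⟩ := hdet
    exact Or.inl (isOfFinOrder (exists_smul_mem_of_det2_ne_zero hd hw hdw A))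
  · have hrich : IsRichDirection p F d := fun v₀ hv₀ => by
      refine (le_card_class v₀ hv₀).trans (Finset.card_le_card
        (Finset.monotone_filter_right F fun v _ hv => ?_))
      by_contra hne
      exact hdet ⟨v - v₀, sub_mem_H hv, by rwa [map_sub, sub_ne_zero]⟩
    exact (hAB d hd0 hrich).imp (fun hA => isOfFinOrder (exists_smul_mem_of_det2_eq_zero hd hd0 hA))
      fun hB => isOfFinOrder (exists_smul_mem_of_det2_eq_zero hd hd0 hB)

variable {k G ι : Type*} [CommRing k] [AddCommGroup G]

/-- The character of `G` through which the monomials of the group ring `k[G]` act on the residue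
field of the prime ideal `P`. -/
def residueChar (P : Ideal k[G]) [P.IsPrime] : AddChar G P.ResidueField :=
  AddChar.toMonoidHomEquiv.symm
    ((algebraMap k[G] P.ResidueField).toMonoidHom.comp (AddMonoidAlgebra.of k G))

lemma residueChar_apply (P : Ideal k[G]) [P.IsPrime] (v : G) :
    residueChar P v = algebraMap k[G] P.ResidueField (.single v 1) := rfl

lemma residueChar_pow_eq_one_iff {P : Ideal k[G]} [P.IsPrime] {v : G} {n : ℕ} :
    residueChar P v ^ n = 1 ↔ (.single v 1 ^ n - 1 : k[G]) ∈ P := by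
  rw [← Ideal.algebraMap_residueField_eq_zero, map_sub, map_pow, map_one, residueChar_apply,
    sub_eq_zero]

lemma sum_residueChar_eq_zero {c : G → k} {P : Ideal k[G]} [P.IsPrime] (hP : annihilator c ≤ P)
    {s : Finset ι} {v : ι → G} {a : k} (h : ∀ u, ∑ i ∈ s, c (u - v i) = a)
    (hz : residueChar P ≠ 1) : ∑ i ∈ s, residueChar P (v i) = 0 := by
  obtain ⟨e, he⟩ := AddChar.ne_one_iff.1 hz
  have mem_annihilator : (.single e 1 - 1) * ∑ i ∈ s, .single (v i) 1 ∈ annihilator c := by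
    have : convolve k G (∑ i ∈ s, .single (v i) 1) c = fun _ => a :=
      funext fun u => (convolve_sum_single_one s v c u).trans (h u)
    rw [mem_annihilator, map_mul, Module.End.mul_apply, this, convolve_single_one_sub_one,
      fwdDiff_const]
    rfl
  have := Ideal.algebraMap_residueField_eq_zero.2 (hP mem_annihilator)
  simp only [map_mul, map_sub, map_one, map_sum, ← residueChar_apply] at this
  exact (mul_eq_zero.1 this).resolve_left (sub_ne_zero.2 he)

end Characters

section Annihilator

lemma exists_pos_mem_radical {R : Type*} [CommRing R] [IsNoetherianRing R] {I : Ideal R} {f : ℕ → R}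
    (hf : ∀ m n, m ∣ n → f m ∣ f n)
    (h : ∀ P : Ideal R, P.IsPrime → I ≤ P → ∃ n, 0 < n ∧ f n ∈ P) :
    ∃ n, 0 < n ∧ f n ∈ I.radical := by
  choose! n n_pos f_mem using h
  let S := (Ideal.finite_minimalPrimes_of_isNoetherianRing R I).toFinset
  have mem_S {P : Ideal R} : P ∈ S ↔ P ∈ I.minimalPrimes := Set.Finite.mem_toFinset _
  refine ⟨∏ P ∈ S, n P, Finset.prod_pos fun P hP => ?_, ?_⟩
  · exact n_pos P (mem_S.1 hP).1.1 (mem_S.1 hP).1.2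
  · rw [← Ideal.sInf_minimalPrimes, Submodule.mem_sInf]
    exact fun P hP => Ideal.mem_of_dvd P (hf _ _ (Finset.dvd_prod_of_mem n (mem_S.2 hP)))
      (f_mem P hP.1.1 hP.1.2)

variable {k : Type*} [Field k] [CharZero k]

lemma isOfFinOrder_residueChar_or_isOfFinOrder_residueChar {p : ℕ} (hp : p.Prime)
    {F : Finset (ℤ × ℤ)} (hF : F.Nonempty) {A B : ℤ × ℤ}
    (hAB : ∀ d ≠ 0, IsRichDirection p F d → det2 d A = 0 ∨ det2 d B = 0) {c : ℤ × ℤ → k} {a : k}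
    (h : ∀ (j : ℕ) u, ∑ v ∈ F, c (u - (1 + p * j) • v) = a) {P : Ideal k[ℤ × ℤ]} [P.IsPrime]
    (hP : annihilator c ≤ P) : IsOfFinOrder (residueChar P A) ∨ IsOfFinOrder (residueChar P B) := by
  have : CharZero P.ResidueField :=
    charZero_of_injective_algebraMap (algebraMap k P.ResidueField).injective
  by_cases hz : residueChar P = 1
  · exact Or.inl (by rw [hz, AddChar.one_apply]; exact IsOfFinOrder.one)
  · refine isOfFinOrder_or_isOfFinOrder_of_forall_sum_pow_eq_zero hp hF hAB _ fun j => ?_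
    simpa only [AddChar.map_nsmul_eq_pow] using sum_residueChar_eq_zero hP (h j) hz

theorem exists_fwdDiff_iterate_eq_zero {p : ℕ} (hp : p.Prime) {F : Finset (ℤ × ℤ)}
    (hF : F.Nonempty) (hcard : #F ≤ p * p) {c : ℤ × ℤ → k} {a : k}
    (h : ∀ (j : ℕ) u, ∑ v ∈ F, c (u - (1 + p * j) • v) = a) :
    ∃ A B : ℤ × ℤ, A ≠ 0 ∧ B ≠ 0 ∧ ∃ m : ℕ, (Δ_[A])^[m] ((Δ_[B])^[m] c) = 0 := by
  obtain ⟨A, B, hA, hB, hAB⟩ := exists_forall_isRichDirection_det2_eq_zero hp.two_le hF hcard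
  have : IsNoetherianRing k[ℤ × ℤ] := Algebra.FiniteType.isNoetherianRing k _
  have mem_prime (P : Ideal k[ℤ × ℤ]) (_ : P.IsPrime) (hP : annihilator c ≤ P) :
      ∃ n, 0 < n ∧ (.single A 1 ^ n - 1) * (.single B 1 ^ n - 1) ∈ P := by
    have hfin := isOfFinOrder_residueChar_or_isOfFinOrder_residueChar hp hF hAB h hP
    simp only [isOfFinOrder_iff_pow_eq_one, residueChar_pow_eq_one_iff] at hfin
    rcases hfin with ⟨n, hn, hnA⟩ | ⟨n, hn, hnB⟩
    · exact ⟨n, hn, P.mul_mem_right _ hnA⟩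
    · exact ⟨n, hn, P.mul_mem_left _ hnB⟩
  obtain ⟨n, hn, m, hm⟩ := exists_pos_mem_radical
    (fun _ _ h => mul_dvd_mul (dvd_pow_sub_one_of_dvd h) (dvd_pow_sub_one_of_dvd h)) mem_prime
  refine ⟨-(n • A), -(n • B), neg_ne_zero.2 (smul_ne_zero hn.ne' hA),
    neg_ne_zero.2 (smul_ne_zero hn.ne' hB), m, ?_⟩
  rwa [AddMonoidAlgebra.single_pow, AddMonoidAlgebra.single_pow, one_pow, mul_pow,
    mem_annihilator, map_mul, Module.End.mul_apply, convolve_single_one_sub_one_pow,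
    convolve_single_one_sub_one_pow] at hm

end Annihilator

section Bounded

variable {M E : Type*} [AddCommMonoid M] [NormedAddCommGroup E] {h : M} {f : M → E}

lemma fwdDiff_comm {A : Type*} [AddCommGroup A] (h h' : M) (f : M → A) :
    Δ_[h] (Δ_[h'] f) = Δ_[h'] (Δ_[h] f) := by
  funext y
  simp only [fwdDiff, add_right_comm y h h']
  abel

lemma fwdDiff_eq_zero_iff_periodic {A : Type*} [AddCommGroup A] {f : M → A} :
    Δ_[h] f = 0 ↔ Function.Periodic f h :=
  funext_iff.trans (forall_congr' fun _ => sub_eq_zero)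

lemma isBounded_range_fwdDiff (hf : Bornology.IsBounded (Set.range f)) (h : M) :
    Bornology.IsBounded (Set.range (Δ_[h] f)) :=
  (hf.sub hf).subset <| Set.range_subset_iff.2 fun y =>
    Set.sub_mem_sub (Set.mem_range_self (y + h)) (Set.mem_range_self y)

lemma isBounded_range_fwdDiff_iterate (hf : Bornology.IsBounded (Set.range f)) (h : M) (n : ℕ) :
    Bornology.IsBounded (Set.range ((Δ_[h])^[n] f)) := by
  induction n with
  | zero => exact hf
  | succ n ih =>
    rw [Function.iterate_succ_apply']
    exact isBounded_range_fwdDiff ih h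

lemma apply_add_nsmul_of_fwdDiff_fwdDiff_eq_zero (hf : Δ_[h] (Δ_[h] f) = 0) (y : M) (n : ℕ) :
    f (y + n • h) = f y + n • Δ_[h] f y := by
  induction n with
  | zero => simp only [zero_nsmul, add_zero]
  | succ n ih =>
    calc f (y + (n + 1) • h) = f (y + n • h) + Δ_[h] f (y + n • h) := by
          rw [fwdDiff, add_sub_cancel, succ_nsmul, add_assoc]
      _ = f y + n • Δ_[h] f y + Δ_[h] f y := by
          rw [ih, (fwdDiff_eq_zero_iff_periodic.1 hf).nsmul n y]
      _ = f y + (n + 1) • Δ_[h] f y := by rw [add_assoc, succ_nsmul]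

variable [NormedSpace ℝ E]

lemma fwdDiff_eq_zero_of_fwdDiff_fwdDiff_eq_zero (hb : Bornology.IsBounded (Set.range f))
    (hf : Δ_[h] (Δ_[h] f) = 0) : Δ_[h] f = 0 := by
  obtain ⟨C, hC⟩ := isBounded_iff_forall_norm_le.1 hb
  funext y
  by_contra hne
  obtain ⟨n, hn⟩ := exists_lt_nsmul (norm_pos_iff.2 hne) (C + C)
  refine hn.not_ge ?_
  calc n • ‖Δ_[h] f y‖ = ‖f (y + n • h) - f y‖ := by
        rw [apply_add_nsmul_of_fwdDiff_fwdDiff_eq_zero hf, add_sub_cancel_left,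
          ← Nat.cast_smul_eq_nsmul ℝ n (Δ_[h] f y), norm_smul, Real.norm_natCast, nsmul_eq_mul]
    _ ≤ C + C := norm_sub_le_of_le (hC _ (Set.mem_range_self _)) (hC _ (Set.mem_range_self _))

lemma fwdDiff_eq_zero_of_fwdDiff_iterate_eq_zero (hb : Bornology.IsBounded (Set.range f)) {n : ℕ}
    (hf : (Δ_[h])^[n] f = 0) : Δ_[h] f = 0 := by
  induction n with
  | zero => exact (congrArg (fwdDiff h) hf).trans (fwdDiff_const h 0)
  | succ n ih =>
    cases n with
    | zero => exact hf
    | succ n =>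
      refine ih ?_
      rw [Function.iterate_succ_apply', Function.iterate_succ_apply'] at hf
      rw [Function.iterate_succ_apply']
      exact fwdDiff_eq_zero_of_fwdDiff_fwdDiff_eq_zero (isBounded_range_fwdDiff_iterate hb h n) hf

lemma fwdDiff_fwdDiff_eq_zero_of_iterate_eq_zero (hb : Bornology.IsBounded (Set.range f)) {h' : M}
    {n : ℕ} (hf : (Δ_[h])^[n] ((Δ_[h'])^[n] f) = 0) : Δ_[h] (Δ_[h'] f) = 0 := by
  have comm : Function.Commute (fwdDiff h) (fwdDiff h' : (M → E) → M → E) := fwdDiff_comm h h'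
  have h1 := fwdDiff_eq_zero_of_fwdDiff_iterate_eq_zero (isBounded_range_fwdDiff_iterate hb h' n) hf
  rw [(comm.iterate_right n).eq] at h1
  have := fwdDiff_eq_zero_of_fwdDiff_iterate_eq_zero (isBounded_range_fwdDiff hb h) h1
  rwa [fwdDiff_comm]

end Bounded

section Splitting

lemma periodic_indicator {G β : Type*} [Add G] [Zero β] {A : G} {S : Set G} {c : G → β}
    (hS : ∀ u, u + A ∈ S ↔ u ∈ S) (hc : ∀ u ∈ S, c (u + A) = c u) :
    Function.Periodic (S.indicator c) A := fun u => by
  by_cases hu : u ∈ S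
  · rw [Set.indicator_of_mem hu, Set.indicator_of_mem ((hS u).2 hu), hc u hu]
  · rw [Set.indicator_of_notMem hu, Set.indicator_of_notMem (mt (hS u).1 hu)]

variable {G R : Type*} [AddCommGroup G] [Ring R] [CharZero R]

lemma eq_of_sub_eq_sub_of_ne_zero {a b a' b' : R} (ha : a = 0 ∨ a = 1) (hb : b = 0 ∨ b = 1)
    (ha' : a' = 0 ∨ a' = 1) (hb' : b' = 0 ∨ b' = 1) (h : b' - a' = b - a) (hne : b - a ≠ 0) :
    a' = a := by
  rcases ha with rfl | rfl <;> rcases hb with rfl | rfl <;> rcases ha' with rfl | rfl <;>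
    rcases hb' with rfl | rfl <;>
    first | rfl | exact absurd (sub_self _) hne | norm_num at h

-- A nonzero difference `c (w + A) - c w` determines `c w`, so where it does not vanish its
-- `B`-periodicity passes to `c`.
theorem exists_periodic_indicator_of_fwdDiff_fwdDiff_eq_zero {A B : G} {c : G → R}
    (hc : ∀ u, c u = 0 ∨ c u = 1) (h : Δ_[A] (Δ_[B] c) = 0) :
    ∃ S : Set G, Function.Periodic (S.indicator c) A ∧ Function.Periodic (Sᶜ.indicator c) B := by
  have hA : Function.Periodic (Δ_[B] c) A := fwdDiff_eq_zero_iff_periodic.1 h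
  have hB : Function.Periodic (Δ_[A] c) B := fwdDiff_eq_zero_iff_periodic.1 (fwdDiff_comm A B c ▸ h)
  refine ⟨{u | ∀ i : ℤ, Δ_[A] c (u + i • A) = 0}, periodic_indicator (fun u => ?_) fun u hu => ?_,
    periodic_indicator (fun u => not_congr ?_) fun u hu => ?_⟩
  · refine (Equiv.addLeft (1 : ℤ)).forall_congr fun i => ?_
    rw [Equiv.coe_addLeft, add_zsmul, one_zsmul, add_assoc]
  · exact sub_eq_zero.1 (by simpa only [zero_zsmul, add_zero, fwdDiff] using hu 0)
  · exact forall_congr' fun i => by rw [add_right_comm, hB]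
  · obtain ⟨i, hi⟩ := not_forall.1 hu
    have apply_add_eq : c (u + i • A + B) = c (u + i • A) :=
      eq_of_sub_eq_sub_of_ne_zero (hc _) (hc _) (hc _) (hc _) (hB (u + i • A)) hi
    exact sub_eq_zero.1 ((hA.zsmul i u).symm.trans (sub_eq_zero.2 apply_add_eq))

end Splitting

section Tiling

lemma IsBinary.indicator {c : ℤ × ℤ → ℂ} (hc : IsBinary c) (S : Set (ℤ × ℤ)) :
    IsBinary (S.indicator c) := fun u =>
  (Set.indicator_eq_zero_or_self S c u).elim Or.inl fun h => h ▸ hc u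

variable {F : Finset (ℤ × ℤ)} {T : Set (ℤ × ℤ)}

lemma IsTiling.nonempty (hT : IsTiling F T) : F.Nonempty :=
  let ⟨tv, htv, _⟩ := hT 0
  ⟨tv.2, htv.2.1⟩

lemma IsTiling.sum_indicator_sub_eq_one (hT : IsTiling F T) (u : ℤ × ℤ) :
    ∑ v ∈ F, T.indicator (fun _ => (1 : ℕ)) (u - v) = 1 := by
  obtain ⟨⟨t, v⟩, ⟨ht, hv, rfl⟩, huniq⟩ := hT u
  rw [Finset.sum_eq_single_of_mem v hv fun w hw hwv => Set.indicator_of_notMem (fun hmem => ?_) _,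
    Set.indicator_of_mem (by rwa [add_sub_cancel_right])]
  exact hwv (congrArg Prod.snd (huniq (_, w) ⟨hmem, hw, (sub_add_cancel _ _).symm⟩))

lemma IsTiling.sum_indicator_sub_nsmul_eq_one (hT : IsTiling F T) {n : ℕ} (hn : n.Coprime #F)
    (u : ℤ × ℤ) : ∑ v ∈ F, T.indicator (fun _ => (1 : ℂ)) (u - n • v) = 1 := by
  have h := sum_sub_nsmul_eq_one F id hT.sum_indicator_sub_eq_one n hn u
  have cast_indicator (w : ℤ × ℤ) :
      ((T.indicator (fun _ => 1) w : ℕ) : ℂ) = T.indicator (fun _ => 1) w := by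
    classical simp only [Set.indicator_apply, Nat.cast_ite, Nat.cast_one, Nat.cast_zero]
  simpa only [Nat.cast_sum, cast_indicator, Nat.cast_one, id_eq] using
    congrArg (Nat.cast : ℕ → ℂ) h

end Tiling

theorem stmt15_general {p : ℕ} (hp : p.Prime) {F : Finset (ℤ × ℤ)} (hcard : #F ∣ p ^ 2)
    {T : Set (ℤ × ℤ)} (hT : IsTiling F T) :
    ∃ x₁ x₂ : ℤ × ℤ → ℂ, IsBinary x₁ ∧ IsBinary x₂ ∧ T.indicator (fun _ => (1 : ℂ)) = x₁ + x₂ ∧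
      (∀ u : ℤ × ℤ, x₁ u = 0 ∨ x₂ u = 0) ∧ OnePeriodic x₁ ∧ OnePeriodic x₂ := by
  set c : ℤ × ℤ → ℂ := T.indicator fun _ => 1
  have isBinary : IsBinary c := fun u => Set.indicator_eq_zero_or_self T (fun _ => 1) u
  have coprime_card (j : ℕ) : (1 + p * j).Coprime #F :=
    Nat.Coprime.coprime_dvd_right hcard (by simp)
  have isBounded : Bornology.IsBounded (Set.range c) :=
    (Set.toFinite {0, 1}).isBounded.subset (Set.range_subset_iff.2 isBinary)
  obtain ⟨A, B, hA, hB, m, hm⟩ := exists_fwdDiff_iterate_eq_zero hp hT.nonempty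
    ((Nat.le_of_dvd (pow_pos hp.pos 2) hcard).trans_eq (sq p)) fun j =>
      hT.sum_indicator_sub_nsmul_eq_one (coprime_card j)
  obtain ⟨S, hSA, hSB⟩ := exists_periodic_indicator_of_fwdDiff_fwdDiff_eq_zero isBinary
    (fwdDiff_fwdDiff_eq_zero_of_iterate_eq_zero isBounded hm)
  refine ⟨S.indicator c, Sᶜ.indicator c, isBinary.indicator S, isBinary.indicator Sᶜ,
    (Set.indicator_self_add_compl S c).symm, fun u => ?_, ⟨A, hA, funext hSA.sub_eq⟩,
    ⟨B, hB, funext hSB.sub_eq⟩⟩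
  by_cases hu : u ∈ S <;> simp [hu]

/-- If `p` is prime, `F ⊆ ℤ²` is a cluster of cardinality `p²` and `T`
is an `F`-tiling, then the orbit closure of `1_T` contains a point `x = x₁ + x₂` where
`x₁, x₂` are `{0,1}`-valued with disjoint supports and each `xᵢ` is identically zero or
`1`-periodic. -/
theorem stmt15 (p : ℕ) (hp : p.Prime) (F : Finset (ℤ × ℤ)) (hF : F.Nonempty)
    (hcard : F.card = p ^ 2) (T : Set (ℤ × ℤ)) (hT : IsTiling F T) :
    ∃ x ∈ orbitClosure (T.indicator fun _ => (1 : ℂ)),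
      ∃ x₁ x₂ : ℤ × ℤ → ℂ, IsBinary x₁ ∧ IsBinary x₂ ∧ x = x₁ + x₂ ∧
        (∀ u : ℤ × ℤ, x₁ u = 0 ∨ x₂ u = 0) ∧
        (x₁ = 0 ∨ OnePeriodic x₁) ∧ (x₂ = 0 ∨ OnePeriodic x₂) := by
  obtain ⟨x₁, x₂, h₁, h₂, hsum, hdisj, hx₁, hx₂⟩ := stmt15_general hp hcard.dvd hT
  exact ⟨_, subset_closure ⟨0, funext fun u => by rw [shift, sub_zero]⟩, x₁, x₂, h₁, h₂, hsum,
    hdisj, Or.inr hx₁, Or.inr hx₂⟩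
end
end
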